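/- arXiv:2603.04357 — 8 statements merged into one kernel-verified Lean document; each statement's English description precedes it below -/
import Mathlib

section
/- Let n ≥ 1, let 1 ≤ k ≤ n, and let b ∈ {0,1}. For the Pauli string M = b·Z̄ + M_k (i.e., k X-factors on the first k qubits, together with one Z-factor on the first qubit when b = 1), the weight enumerator of the coset M + S modulo the stabilizer group S of the [[n,1]] Z-type repetition code equals g_{k,n}(x,y) = (1/2)·(x+y)^(n−k)·(2y)^k, for all real x, y. -/
/-!
The monomial `x ^ (n - wt v) * y ^ wt v` is a product over qubits of local factors
(`x` for `I`, `y` otherwise). Summed over *all* Z-patterns `z` added to `Mk n k`, the enumerator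
therefore factorizes over qubits: each of the first `k` qubits carries an `X`, so it contributes
`y + y`, and each other qubit contributes `x + y` (`sum_monomial_all`).

As `1 ≤ k`, qubit `0` carries an `X`, so toggling its Z-factor does not change the weight. Hence
the shift by `b • Zbar` is immaterial, and toggling gives a weight-preserving bijection between
even and odd Z-patterns (`sum_monomial_even_eq_odd`). The even patterns, which are the elements
of the stabilizer group, account for exactly half of the full sum.
-/

/-- The weight of an `n`-qubit Pauli string: the number of non-identity tensor factors. -/
def wt {n : ℕ} (v : Fin n → ZMod 2 × ZMod 2) : ℕ :=
  (Finset.univ.filter fun i => v i ≠ (0, 0)).card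

/-- The weight enumerator of a finite set of `n`-qubit Pauli strings. -/
noncomputable def enum {n : ℕ} (T : Finset (Fin n → ZMod 2 × ZMod 2)) (x y : ℝ) : ℝ :=
  ∑ v ∈ T, x ^ (n - wt v) * y ^ wt v

/-- The stabilizer group of the `[[n,1]]` Z-type repetition code: Pauli strings with no
X-part and even total Z-weight. -/
def repStab (n : ℕ) : Finset (Fin n → ZMod 2 × ZMod 2) :=
  Finset.univ.filter fun v => (∀ i, (v i).1 = 0) ∧ (∑ i, (v i).2) = 0

/-- The logical-Z representative: `Z ⊗ I^{⊗(n-1)}`. -/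
def Zbar (n : ℕ) : Fin n → ZMod 2 × ZMod 2 :=
  fun i => if (i : ℕ) = 0 then (0, 1) else (0, 0)

/-- `Mk n k`: the Pauli string with X-factors on the first `k` qubits. -/
def Mk (n k : ℕ) : Fin n → ZMod 2 × ZMod 2 :=
  fun i => if (i : ℕ) < k then (1, 0) else (0, 0)

/-- The contribution of a single tensor factor to the weight monomial: `x` for the identity,
`y` for any other Pauli. -/
noncomputable def localFactor (x y : ℝ) (p : ZMod 2 × ZMod 2) : ℝ :=
  if p = (0, 0) then x else y

lemma monomial_eq_prod {n : ℕ} (v : Fin n → ZMod 2 × ZMod 2) (x y : ℝ) :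
    x ^ (n - wt v) * y ^ wt v = ∏ i, localFactor x y (v i) := by
  have h := Finset.card_filter_add_card_filter_not (s := (Finset.univ : Finset (Fin n)))
    (fun i => v i = (0, 0))
  rw [Finset.card_univ, Fintype.card_fin] at h
  have h' : n - wt v = (Finset.univ.filter fun i => v i = (0, 0)).card := by
    unfold wt
    simp only [ne_eq]
    omega
  rw [h']
  simp only [localFactor, Finset.prod_ite, Finset.prod_const, wt, ne_eq]

/-- The weight monomial of `Mk n k` multiplied by the Z-pattern `z`. -/
noncomputable def zMonomial (n k : ℕ) (x y : ℝ) (z : Fin n → ZMod 2) : ℝ :=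
  ∏ i, localFactor x y (Mk n k i + (0, z i))

/-- Z-factors on the X-carrying qubits do not affect the weight. -/
lemma zMonomial_congr {n k : ℕ} (x y : ℝ) {z z' : Fin n → ZMod 2}
    (h : ∀ i : Fin n, k ≤ (i : ℕ) → z i = z' i) :
    zMonomial n k x y z = zMonomial n k x y z' := by
  refine Finset.prod_congr rfl fun i _ => ?_
  by_cases hi : (i : ℕ) < k
  · simp [Mk, hi, localFactor]
  · rw [h i (by omega)]

lemma sum_monomial_all {n k : ℕ} (hkn : k ≤ n) (x y : ℝ) :
    ∑ z : Fin n → ZMod 2, zMonomial n k x y z = (x + y) ^ (n - k) * (2 * y) ^ k := by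
  have hloc (i : Fin n) : ∑ c : ZMod 2, localFactor x y (Mk n k i + (0, c))
      = if (i : ℕ) < k then 2 * y else x + y := by
    have h2 (f : ZMod 2 → ℝ) : ∑ c, f c = f 0 + f 1 := Fin.sum_univ_two f
    rw [h2]
    split_ifs with hi
    · simp [Mk, hi, localFactor, two_mul]
    · simp [Mk, hi, localFactor]
  have hprod := Finset.prod_univ_sum (fun _ : Fin n => (Finset.univ : Finset (ZMod 2)))
    (fun i c => localFactor x y (Mk n k i + (0, c)))
  rw [Fintype.piFinset_univ] at hprod
  unfold zMonomial
  rw [← hprod, Finset.prod_congr rfl fun i _ => hloc i,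
    Fin.prod_univ_eq_prod_range (fun i => if i < k then 2 * y else x + y) n]
  obtain ⟨m, rfl⟩ := Nat.exists_eq_add_of_le hkn
  rw [Finset.prod_range_add, Finset.prod_congr rfl fun i hi => if_pos (Finset.mem_range.1 hi)]
  simp [mul_comm]

/-- Toggling the Z-factor on qubit `0` exchanges the two parities and preserves weights. -/
lemma sum_monomial_even_eq_odd {n k : ℕ} (hn : 1 ≤ n) (hk1 : 1 ≤ k) (x y : ℝ) :
    ∑ z : Fin n → ZMod 2 with ∑ i, z i = 0, zMonomial n k x y z
      = ∑ z : Fin n → ZMod 2 with ¬ ∑ i, z i = 0, zMonomial n k x y z := by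
  let e : Fin n → ZMod 2 := Pi.single ⟨0, hn⟩ 1
  have he : ∑ i, e i = 1 := by simp [e]
  have hee (z : Fin n → ZMod 2) : z + e + e = z := by
    funext i
    simp only [Pi.add_apply]
    rw [add_assoc, CharTwo.add_self_eq_zero, add_zero]
  have h01 : ∀ c : ZMod 2, c + 1 = 0 ↔ ¬ c = 0 := by decide
  refine Finset.sum_bij' (fun z _ => z + e) (fun z _ => z + e) ?_ ?_
    (fun z _ => hee z) (fun z _ => hee z) ?_
  · intro z hz
    simpa [Finset.sum_add_distrib, he, h01] using hz
  · intro z hz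
    simpa [Finset.sum_add_distrib, he, h01] using hz
  · intro z _
    refine zMonomial_congr x y fun i hi => ?_
    have : i ≠ ⟨0, hn⟩ := by
      rintro rfl
      simp at hi
      omega
    simp [e, this]

lemma enum_coset_eq {n k : ℕ} (hk1 : 1 ≤ k) (b : ZMod 2) (x y : ℝ) :
    enum ((repStab n).image fun s => (b • Zbar n + Mk n k) + s) x y
      = ∑ z : Fin n → ZMod 2 with ∑ i, z i = 0, zMonomial n k x y z := by
  unfold enum
  rw [Finset.sum_image (fun _ _ _ _ h => add_left_cancel h)]
  refine Finset.sum_bij' (fun s _ i => (s i).2) (fun z _ i => (0, z i)) ?_ ?_ ?_ ?_ ?_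
  · intro s hs
    simpa using (Finset.mem_filter.1 hs).2.2
  · intro z hz
    simpa [repStab] using hz
  · intro s hs
    funext i
    exact Prod.ext ((Finset.mem_filter.1 hs).2.1 i).symm rfl
  · intro z _
    rfl
  · intro s hs
    have hs1 := (Finset.mem_filter.1 hs).2.1
    rw [monomial_eq_prod]
    refine Finset.prod_congr rfl fun i _ => ?_
    have hsi : s i = (0, (s i).2) := Prod.ext (hs1 i) rfl
    rw [Pi.add_apply, hsi]
    by_cases hi : (i : ℕ) = 0
    · have hk : 0 < k := hk1
      simp [Zbar, Mk, hi, hk, localFactor]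
    · simp [Zbar, hi, ← Prod.zero_eq_mk]

theorem weight_enumerator_coset_g (n k : ℕ) (hn : 1 ≤ n) (hk1 : 1 ≤ k) (hkn : k ≤ n)
    (b : ZMod 2) (x y : ℝ) :
    enum ((repStab n).image fun s => (b • Zbar n + Mk n k) + s) x y
      = (1 / 2) * (x + y) ^ (n - k) * (2 * y) ^ k := by
  have hsplit := Finset.sum_filter_add_sum_filter_not (Finset.univ : Finset (Fin n → ZMod 2))
    (fun z => ∑ i, z i = 0) (zMonomial n k x y)
  rw [← sum_monomial_even_eq_odd hn hk1, sum_monomial_all hkn] at hsplit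
  rw [enum_coset_eq hk1]
  linarith
end

section
/- Let n ≥ 1 and 0 ≤ k ≤ n−1, and let M_k be the Pauli string consisting of X-factors on the first k qubits. Then, modulo the stabilizer group S of the [[n,1]] Z-type repetition code, the weight enumerator of the coset (M_k + X̄) + S equals g_{n−k,n}(x,y), and the weight enumerator of the coset (M_k + Ȳ) + S also equals g_{n−k,n}(x,y) = (1/2)·(x+y)^k·(2y)^(n−k), for all real x, y. -/
/-- The logical-X representative: `X^{⊗n}`. -/
def Xbar (n : ℕ) : Fin n → ZMod 2 × ZMod 2 := fun _ => (1, 0)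

/-- The logical-Y representative: `Y ⊗ X^{⊗(n-1)}`. -/
def Ybar (n : ℕ) : Fin n → ZMod 2 × ZMod 2 :=
  fun i => if (i : ℕ) = 0 then (1, 1) else (1, 0)

/-- The factor contributed by a single-qubit Pauli to the weight monomial. -/
noncomputable def pauliFactor (x y : ℝ) (a : ZMod 2 × ZMod 2) : ℝ :=
  if a = (0, 0) then x else y

/-- The nontrivial character `z ↦ (-1) ^ z` of `ZMod 2`. -/
noncomputable def signChar (z : ZMod 2) : ℝ := if z = 0 then 1 else -1

theorem zmod_two_cases : ∀ a : ZMod 2, a = 0 ∨ a = 1 := by decide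

theorem signChar_add (a b : ZMod 2) : signChar (a + b) = signChar a * signChar b := by
  have h : (1 : ZMod 2) + 1 = 0 := by decide
  rcases zmod_two_cases a with rfl | rfl <;> rcases zmod_two_cases b with rfl | rfl <;>
    simp [signChar, h]

theorem signChar_sum {ι : Type*} (s : Finset ι) (z : ι → ZMod 2) :
    signChar (∑ i ∈ s, z i) = ∏ i ∈ s, signChar (z i) := by
  classical
  induction s using Finset.induction_on with
  | empty => simp [signChar]
  | insert a s ha ih => rw [Finset.sum_insert ha, Finset.prod_insert ha, signChar_add, ih]

theorem weight_monomial_eq_prod {n : ℕ} (v : Fin n → ZMod 2 × ZMod 2) (x y : ℝ) :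
    x ^ (n - wt v) * y ^ wt v = ∏ i, pauliFactor x y (v i) := by
  have h := Finset.card_filter_add_card_filter_not
    (s := (Finset.univ : Finset (Fin n))) (fun i => v i = (0, 0))
  rw [Finset.card_univ, Fintype.card_fin] at h
  have h' : n - wt v = (Finset.univ.filter fun i => v i = (0, 0)).card :=
    Nat.sub_eq_of_eq_add h.symm
  simp only [pauliFactor]
  rw [Finset.prod_ite, Finset.prod_const, Finset.prod_const, h']
  rfl

theorem enum_coset_eq_sum {n : ℕ} (p : Fin n → ZMod 2 × ZMod 2) (x y : ℝ) :
    enum ((repStab n).image fun s => p + s) x y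
      = ∑ z : Fin n → ZMod 2,
          if ∑ i, z i = 0 then ∏ i, pauliFactor x y (p i + (0, z i)) else 0 := by
  unfold enum
  rw [Finset.sum_image (fun a _ b _ h => add_left_cancel h), ← Finset.sum_filter]
  refine Finset.sum_bij' (fun s _ i => (s i).2) (fun z _ i => (0, z i)) ?_ ?_ ?_ ?_ ?_
  · intro s hs
    simpa using (Finset.mem_filter.mp hs).2.2
  · intro z hz
    simpa [repStab] using hz
  · intro s hs
    funext i
    exact Prod.ext ((Finset.mem_filter.mp hs).2.1 i).symm rfl
  · intro z _
    rfl
  · intro s hs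
    rw [weight_monomial_eq_prod]
    refine Finset.prod_congr rfl fun i _ => ?_
    have h : s i = (0, (s i).2) := Prod.ext ((Finset.mem_filter.mp hs).2.1 i) rfl
    rw [Pi.add_apply, ← h]

theorem sum_prod_zmod_two {n : ℕ} (g : Fin n → ZMod 2 → ℝ) :
    ∑ z : Fin n → ZMod 2, ∏ i, g i (z i) = ∏ i, (g i 0 + g i 1) := by
  have h := Finset.prod_univ_sum (fun _ : Fin n => (Finset.univ : Finset (ZMod 2))) g
  rw [Fintype.piFinset_univ] at h
  rw [← h]
  exact Finset.prod_congr rfl fun i _ => Fin.sum_univ_two (g i)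

/-- The enumerator of an arbitrary coset of the stabilizer group, obtained by writing the parity
constraint as `(1 + signChar) / 2`. -/
theorem enum_coset {n : ℕ} (p : Fin n → ZMod 2 × ZMod 2) (x y : ℝ) :
    enum ((repStab n).image fun s => p + s) x y
      = 1 / 2 * (∏ i, (pauliFactor x y (p i + (0, 0)) + pauliFactor x y (p i + (0, 1)))
          + ∏ i, (pauliFactor x y (p i + (0, 0)) - pauliFactor x y (p i + (0, 1)))) := by
  have h₂ : ∏ i, (pauliFactor x y (p i + (0, 0)) - pauliFactor x y (p i + (0, 1)))
      = ∑ z : Fin n → ZMod 2, ∏ i, (signChar (z i) * pauliFactor x y (p i + (0, z i))) := by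
    rw [sum_prod_zmod_two fun i a => signChar a * pauliFactor x y (p i + (0, a))]
    simp [signChar, sub_eq_add_neg]
  rw [enum_coset_eq_sum, h₂, ← sum_prod_zmod_two fun i a => pauliFactor x y (p i + (0, a)),
    ← Finset.sum_add_distrib, Finset.mul_sum]
  refine Finset.sum_congr rfl fun z _ => ?_
  rw [Finset.prod_mul_distrib, ← signChar_sum]
  unfold signChar
  split_ifs <;> ring

theorem enum_coset_of_xPart {n k : ℕ} (hk : k < n) (p : Fin n → ZMod 2 × ZMod 2)
    (hp : ∀ i : Fin n, (p i).1 = if (i : ℕ) < k then 0 else 1) (x y : ℝ) :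
    enum ((repStab n).image fun s => p + s) x y
      = (1 / 2) * (x + y) ^ k * (2 * y) ^ (n - k) := by
  have hlow : ∀ a : ZMod 2 × ZMod 2, a.1 = 0 →
      pauliFactor x y (a + (0, 0)) + pauliFactor x y (a + (0, 1)) = x + y := by
    rintro ⟨a, b⟩ (rfl : a = 0)
    have h : (1 : ZMod 2) + 1 = 0 := by decide
    rcases zmod_two_cases b with rfl | rfl <;> simp [pauliFactor, h, add_comm]
  have hhigh : ∀ a b : ZMod 2 × ZMod 2, a.1 = 1 → b.1 = 0 → pauliFactor x y (a + b) = y := by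
    intro a b ha hb
    refine if_neg fun h => ?_
    have := congrArg Prod.fst h
    simp [ha, hb] at this
  have hzero :
      ∏ i, (pauliFactor x y (p i + (0, 0)) - pauliFactor x y (p i + (0, 1))) = 0 := by
    refine Finset.prod_eq_zero (Finset.mem_univ ⟨k, hk⟩) ?_
    have h := hp ⟨k, hk⟩
    rw [if_neg (lt_irrefl k)] at h
    rw [hhigh _ _ h rfl, hhigh _ _ h rfl, sub_self]
  have hfactor : ∀ i : Fin n,
      pauliFactor x y (p i + (0, 0)) + pauliFactor x y (p i + (0, 1))
        = if (i : ℕ) < k then x + y else 2 * y := by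
    intro i
    have h := hp i
    split_ifs at h ⊢
    · exact hlow _ h
    · rw [hhigh _ _ h rfl, hhigh _ _ h rfl, two_mul]
  have hprod : ∏ i : Fin n, (if (i : ℕ) < k then x + y else 2 * y)
      = (x + y) ^ k * (2 * y) ^ (n - k) := by
    obtain ⟨m, rfl⟩ := Nat.exists_eq_add_of_lt hk
    rw [add_assoc, Fin.prod_univ_add]
    simp
  rw [enum_coset, hzero, Finset.prod_congr rfl fun i _ => hfactor i, hprod]
  ring

theorem weight_enumerator_Xbar_Ybar_cosets (n k : ℕ) (hn : 1 ≤ n) (hk : k ≤ n - 1)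
    (x y : ℝ) :
    enum ((repStab n).image fun s => (Mk n k + Xbar n) + s) x y
        = (1 / 2) * (x + y) ^ k * (2 * y) ^ (n - k) ∧
      enum ((repStab n).image fun s => (Mk n k + Ybar n) + s) x y
        = (1 / 2) * (x + y) ^ k * (2 * y) ^ (n - k) := by
  have hkn : k < n := by omega
  have h2 : (1 : ZMod 2) + 1 = 0 := by decide
  constructor
  · refine enum_coset_of_xPart hkn _ (fun i => ?_) x y
    simp only [Pi.add_apply, Mk, Xbar]
    split_ifs <;> simp [h2]
  · refine enum_coset_of_xPart hkn _ (fun i => ?_) x y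
    simp only [Pi.add_apply, Mk, Ybar]
    split_ifs <;> simp [h2]
end

section
/- Let n ≥ 1 and 0 ≤ k ≤ n, and let N(S) = {v : Fin n → ZMod 2 × ZMod 2 | (v i).1 = (v j).1 for all i, j} be the normalizer of the stabilizer group of the [[n,1]] Z-type repetition code. For the Pauli string M_k (X-factors on the first k qubits), the weight enumerator of the normalizer coset M_k + N(S) equals 2·(g_{k,n}(x,y) + g_{n−k,n}(x,y)) for all real x, y. -/
/-- The normalizer of the stabilizer group of the `[[n,1]]` Z-type repetition code:
Pauli strings with constant X-part. -/
def repNorm (n : ℕ) : Finset (Fin n → ZMod 2 × ZMod 2) :=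
  Finset.univ.filter fun v => ∀ i j, (v i).1 = (v j).1

/-- For `n ≥ 1` the constant X-bit is determined by the string, so a sum over the normalizer is a
sum over the X-bit and the Z-part. -/
lemma sum_repNorm {n : ℕ} (hn : 1 ≤ n) (F : (Fin n → ZMod 2 × ZMod 2) → ℝ) :
    ∑ s ∈ repNorm n, F s = ∑ c : ZMod 2, ∑ z : Fin n → ZMod 2, F fun i => (c, z i) := by
  rw [← Fintype.sum_prod_type' (f := fun (c : ZMod 2) (z : Fin n → ZMod 2) => F fun i => (c, z i))]
  symm
  refine Finset.sum_bij' (fun p _ i => (p.1, p.2 i))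
    (fun s _ => ((s ⟨0, hn⟩).1, fun i => (s i).2)) ?_ ?_ ?_ ?_ ?_
  · intro p _
    simp [repNorm]
  · simp
  · simp
  · intro s hs
    funext i
    simp only [repNorm, Finset.mem_filter, Finset.mem_univ, true_and] at hs
    exact Prod.ext (hs _ _) rfl
  · simp

lemma sum_localFactor (x y : ℝ) (a c : ZMod 2) :
    ∑ b : ZMod 2, localFactor x y ((a, 0) + (c, b)) = if a = c then x + y else 2 * y := by
  have h2 : ∀ f : ZMod 2 → ℝ, ∑ b, f b = f 0 + f 1 := fun f => Fin.sum_univ_two f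
  have h : (a + c = 0) ↔ a = c := by revert a c; decide
  rw [h2]
  by_cases hac : a = c
  · rw [if_pos hac]
    simp [localFactor, h.2 hac]
  · simp [localFactor, h, hac, two_mul]

lemma prod_ite_lt {n k : ℕ} (hk : k ≤ n) (a b : ℝ) :
    ∏ i : Fin n, (if (i : ℕ) < k then a else b) = a ^ k * b ^ (n - k) := by
  obtain ⟨m, rfl⟩ := Nat.exists_eq_add_of_le hk
  rw [Fin.prod_univ_add]
  simp

theorem weight_enumerator_normalizer_coset (n k : ℕ) (hn : 1 ≤ n) (hk : k ≤ n) (x y : ℝ) :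
    enum ((repNorm n).image fun s => Mk n k + s) x y
      = 2 * ((1 / 2) * (x + y) ^ (n - k) * (2 * y) ^ k
          + (1 / 2) * (x + y) ^ k * (2 * y) ^ (n - k)) := by
  have h2 : ∀ f : ZMod 2 → ℝ, ∑ b, f b = f 0 + f 1 := fun f => Fin.sum_univ_two f
  have key : ∀ c : ZMod 2, ∑ z : Fin n → ZMod 2, ∏ i, localFactor x y (Mk n k i + (c, z i))
      = ∏ i : Fin n, if (i : ℕ) < k then (if 1 = c then x + y else 2 * y)
          else (if 0 = c then x + y else 2 * y) := by
    intro c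
    rw [← Fintype.prod_sum (fun (i : Fin n) (b : ZMod 2) => localFactor x y (Mk n k i + (c, b)))]
    refine Finset.prod_congr rfl fun i _ => ?_
    unfold Mk
    by_cases hi : (i : ℕ) < k
    · simp only [if_pos hi, sum_localFactor]
    · simp only [if_neg hi, sum_localFactor]
  unfold enum
  rw [Finset.sum_image fun a _ b _ h => add_left_cancel h]
  simp only [monomial_eq_prod]
  rw [sum_repNorm hn]
  simp only [Pi.add_apply, key, h2, prod_ite_lt hk]
  simp
  ring
end

section
/- Let m, n ≥ 1. In the additive group of Pauli strings on Fin m × Fin n, the subgroup generated by the following generators: (a) for each block i and each 0 ≤ j < n−1, the string with X-part 1 exactly at positions (i,j) and (i,j+1) and Z-part 0 everywhere (the X-type within-block repetition generators), and (b) for each 0 ≤ i < m−1, the string with Z-part 1 at every position of blocks i and i+1 and all other entries 0 (the Z^{⊗n}⊗Z^{⊗n} block generators), is exactly the set of strings v such that every block has even X-weight (∑_j (v(i,j)).1 = 0 for all i), the Z-part is constant within each block ((v(i,j)).2 = ζ_i for all j), and ∑_i ζ_i = 0 in ZMod 2. -/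
/-!
Both families of generators are copies of the generators `e_j + e_{j+1}` of the even-weight code
in `Fin k → ZMod 2`, which span all vectors of coordinate sum zero (`mem_of_sum_eq_zero`): the
differences `e_a - e_0` are telescoping sums of generators, and a vector `f` with `∑ f = 0` is
`∑ a, f a • (e_a - e_0)`.

A string satisfying the parity conditions is the sum over the blocks of its X-parts, embedded by
`xBlock i`, plus its Z-part, which is the image under `zBlocks` of the block values `ζ`. Applying
the even-weight lemma to the preimages of the closure under these homomorphisms places every
summand in the closure. Conversely, the parity conditions are additive and hold for the generators.
-/

/-- Generators of type (a): for each block `i` and each `j` with `j+1 < n`, the string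
with X-part 1 exactly at positions `(i,j)` and `(i,j+1)`, and Z-part 0 everywhere. -/
def genA (m n : ℕ) : Set (Fin m × Fin n → ZMod 2 × ZMod 2) :=
  {v | ∃ (i : Fin m) (j : ℕ) (h : j + 1 < n),
    v = fun p =>
      (if p.1 = i ∧ ((p.2 : ℕ) = j ∨ (p.2 : ℕ) = j + 1) then 1 else 0, 0)}

/-- Generators of type (b): for each `i` with `i+1 < m`, the string with Z-part 1 at
every position of blocks `i` and `i+1`, and all other entries 0. -/
def genB (m n : ℕ) : Set (Fin m × Fin n → ZMod 2 × ZMod 2) :=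
  {v | ∃ (i : ℕ) (h : i + 1 < m),
    v = fun p =>
      (0, if (p.1 : ℕ) = i ∨ (p.1 : ℕ) = i + 1 then 1 else 0)}

/-- The generator `e_j + e_{j+1}` of the even-weight code; the position `j` is a natural number,
as in `genA` and `genB`. -/
def pairVec (k j : ℕ) : Fin k → ZMod 2 :=
  fun t => if (t : ℕ) = j ∨ (t : ℕ) = j + 1 then 1 else 0

lemma pairVec_eq (k j : ℕ) (h : j + 1 < k) :
    pairVec k j = Pi.single ⟨j, by omega⟩ 1 + Pi.single ⟨j + 1, h⟩ 1 := by
  funext t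
  simp only [pairVec, Pi.add_apply, Pi.single_apply, Fin.ext_iff]
  by_cases h1 : (t : ℕ) = j
  · simp [h1]
  · simp [h1]

lemma sum_pairVec (k j : ℕ) (h : j + 1 < k) : ∑ t, pairVec k j t = 0 := by
  rw [pairVec_eq k j h]
  simp only [Pi.add_apply, Finset.sum_add_distrib, Finset.sum_pi_single', Finset.mem_univ, if_true]
  exact CharTwo.add_self_eq_zero 1

/-- The vectors `e_j + e_{j+1}` generate the even-weight code. -/
lemma mem_of_sum_eq_zero (k : ℕ) (H : AddSubgroup (Fin k → ZMod 2))
    (hH : ∀ j, j + 1 < k → pairVec k j ∈ H) (f : Fin k → ZMod 2) (hf : ∑ t, f t = 0) :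
    f ∈ H := by
  rcases Nat.eq_zero_or_pos k with rfl | hk
  · rw [Subsingleton.elim f 0]
    exact H.zero_mem
  have key : ∀ a (ha : a < k),
      (Pi.single ⟨a, ha⟩ 1 - Pi.single ⟨0, hk⟩ 1 : Fin k → ZMod 2) ∈ H := by
    intro a
    induction a with
    | zero => intro _; rw [sub_self]; exact H.zero_mem
    | succ a ih =>
      intro ha
      have h1 := H.sub_mem (hH a ha) (ih (by omega))
      rw [pairVec_eq k a ha] at h1
      -- `e_a + e_{a+1} - (e_a - e_0) = e_{a+1} + e_0`, and signs are immaterial modulo 2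
      convert h1 using 1
      funext t
      simp only [Pi.add_apply, Pi.sub_apply, CharTwo.sub_eq_add]
      rw [add_add_add_comm, CharTwo.add_self_eq_zero, zero_add]
  have hdecomp : f = ∑ a : Fin k, f a • (Pi.single a 1 - Pi.single ⟨0, hk⟩ 1 : Fin k → ZMod 2) := by
    simp only [smul_sub, Finset.sum_sub_distrib, ← Finset.sum_smul, hf, zero_smul, sub_zero]
    exact pi_eq_sum_univ' f
  rw [hdecomp]
  refine H.sum_mem fun a _ => ?_
  have hc : ∀ c : ZMod 2, c = 0 ∨ c = 1 := by decide
  rcases hc (f a) with h | h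
  · rw [h, zero_smul]; exact H.zero_mem
  · rw [h, one_smul]; exact key a a.2

/-- The X-type string supported on block `i` with the given X-part there. -/
def xBlock (m n : ℕ) (i : Fin m) : (Fin n → ZMod 2) →+ (Fin m × Fin n → ZMod 2 × ZMod 2) where
  toFun f p := (if p.1 = i then f p.2 else 0, 0)
  map_zero' := by funext p; simp
  map_add' f g := by funext p; by_cases h : p.1 = i <;> simp [h]

/-- The Z-type string whose Z-part is constant on each block, with the given values. -/
def zBlocks (m n : ℕ) : (Fin m → ZMod 2) →+ (Fin m × Fin n → ZMod 2 × ZMod 2) where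
  toFun ζ p := (0, ζ p.1)
  map_zero' := by funext p; simp
  map_add' f g := by funext p; simp

theorem closure_concat_generators (m n : ℕ) (hm : 1 ≤ m) (hn : 1 ≤ n) :
    (AddSubgroup.closure (genA m n ∪ genB m n) : Set (Fin m × Fin n → ZMod 2 × ZMod 2))
      = {v | (∀ i, ∑ j, (v (i, j)).1 = 0) ∧
          ∃ ζ : Fin m → ZMod 2,
            (∀ i j, (v (i, j)).2 = ζ i) ∧ ∑ i, ζ i = 0} := by
  ext v
  simp only [SetLike.mem_coe, Set.mem_setOf_eq]
  constructor
  · intro hv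
    induction hv using AddSubgroup.closure_induction with
    | mem x hx =>
      rcases hx with ⟨i, j, h, rfl⟩ | ⟨i, h, rfl⟩
      · refine ⟨fun i' => ?_, 0, by simp, by simp⟩
        by_cases hi : i' = i
        · simpa [hi, pairVec] using sum_pairVec n j h
        · simp [hi]
      · exact ⟨by simp, pairVec m i, fun _ _ => rfl, sum_pairVec m i h⟩
    | zero => exact ⟨by simp, 0, by simp, by simp⟩
    | add x y _ _ hx hy =>
      obtain ⟨hx1, ζ, hx2, hx3⟩ := hx
      obtain ⟨hy1, η, hy2, hy3⟩ := hy
      exact ⟨by simp [Finset.sum_add_distrib, hx1, hy1], ζ + η, by simp [hx2, hy2],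
        by simp [Finset.sum_add_distrib, hx3, hy3]⟩
    | neg x _ hx =>
      obtain ⟨hx1, ζ, hx2, hx3⟩ := hx
      exact ⟨by simp [hx1], -ζ, by simp [hx2], by simp [hx3]⟩
  · rintro ⟨hX, ζ, hZ, hζ⟩
    have hdecomp : v = ∑ i, xBlock m n i (fun j => (v (i, j)).1) + zBlocks m n ζ := by
      funext ⟨i, j⟩
      ext
      · simp [xBlock, zBlocks, Finset.sum_apply, Prod.fst_sum]
      · simp [xBlock, zBlocks, Finset.sum_apply, Prod.snd_sum, hZ]
    rw [hdecomp]
    refine add_mem (sum_mem fun i _ => ?_) ?_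
    · refine mem_of_sum_eq_zero n
        ((AddSubgroup.closure (genA m n ∪ genB m n)).comap (xBlock m n i)) (fun j hj => ?_) _ (hX i)
      refine AddSubgroup.subset_closure (Or.inl ⟨i, j, hj, ?_⟩)
      funext p
      simp [xBlock, pairVec, ite_and]
    · refine mem_of_sum_eq_zero m
        ((AddSubgroup.closure (genA m n ∪ genB m n)).comap (zBlocks m n)) (fun j hj => ?_) _ hζ
      exact AddSubgroup.subset_closure (Or.inr ⟨j, hj, rfl⟩)
end

section
/- Let m, n ≥ 1 and let S be the stabilizer group of the n×m concatenated bit- and phase-flip repetition code. For every Pauli string v : Fin m × Fin n → ZMod 2 × ZMod 2 there exists s ∈ S such that the string w = v + s satisfies, for every block i: (w(i,j)).2 = (v(i,j)).2 for all j (the Z-part is unchanged), (w(i,0)).1 = ∑_j (v(i,j)).1, and (w(i,j)).1 = 0 for j ≠ 0. In other words, every Pauli string is equivalent modulo stabilizers to a string with the same Z-part and with the X-weight parity of each block concentrated on the first qubit of that block. -/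
/-- The stabilizer group of the `n × m` concatenated bit- and phase-flip repetition code:
even X-weight in each block, Z-part constant within each block, and the block Z-values
sum to zero. -/
def concatStab (m n : ℕ) : Finset (Fin m × Fin n → ZMod 2 × ZMod 2) :=
  Finset.univ.filter fun v =>
    (∀ i, ∑ j, (v (i, j)).1 = 0) ∧
    ∃ ζ : Fin m → ZMod 2, (∀ i j, (v (i, j)).2 = ζ i) ∧ ∑ i, ζ i = 0

theorem exists_concat_stabilizer_normal_form (m n : ℕ) (hm : 1 ≤ m) (hn : 1 ≤ n)
    (v : Fin m × Fin n → ZMod 2 × ZMod 2) :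
    ∃ s ∈ concatStab m n,
      (∀ i j, ((v + s) (i, j)).2 = (v (i, j)).2) ∧
      (∀ i, ((v + s) (i, (⟨0, hn⟩ : Fin n))).1 = ∑ j, (v (i, j)).1) ∧
      (∀ i, ∀ j : Fin n, (j : ℕ) ≠ 0 → ((v + s) (i, j)).1 = 0) := by
  -- The difference between the normal form and `v`: X-part `(∑ v) δ_{j,0} - v`, trivial Z-part.
  refine ⟨fun p => ((if p.2 = ⟨0, hn⟩ then ∑ j, (v (p.1, j)).1 else 0) - (v p).1, 0),
    ?_, ?_, ?_, ?_⟩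
  · simp only [concatStab, Finset.mem_filter, Finset.mem_univ, true_and]
    refine ⟨fun i => ?_, fun _ => 0, fun _ _ => rfl, by simp⟩
    simp [Finset.sum_sub_distrib]
  · intro i j
    simp
  · intro i
    simp
  · intro i j hj
    have hj' : j ≠ ⟨0, hn⟩ := fun h => hj (by rw [h])
    simp [hj', CharTwo.add_self_eq_zero]
end

section
/- Define ψ(p) = −((1−p)^2·logb 2 ((1−p)^2) + 2·p·(1−p)·logb 2 (p·(1−p)) + p^2·logb 2 (p^2)) for 0 < p < 1/2, the Shannon entropy in bits of the error distribution ((1−p)^2, p(1−p), p^2, p(1−p)) of the independent X-Z channel. Then ψ(0.110027) < 1 and ψ(0.110028) > 1, and consequently there exists p with 0.110027 < p < 0.110028 such that ψ(p) = 1. -/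
/-!
By independence of the two error types, `ψ(p) = 2 h(p) / log 2`, where `h` is the binary entropy
in nats, so comparing `ψ(p)` with `1` means comparing `2 h(p)` with `log 2`.
At the two endpoints `2 h(p) - log 2` is about `-3.6e-6` and `5.7e-7`, so bounds on the logarithms
accurate to about `1e-8` suffice. These come from truncating
`-log y = 2 artanh ((1 - y) / (1 + y))` after three terms (`log_bounds`), applied to `y = 8 p` and
`y = 1 - p`, both close to `1`, together with Mathlib's bounds on `log 2`.
The root is given by the intermediate value theorem.
-/

/-- The Shannon entropy (in bits) of the error distribution
`((1-p)^2, p(1-p), p^2, p(1-p))` of the independent X-Z channel. -/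
noncomputable def indXZEntropy (p : ℝ) : ℝ :=
  -((1 - p) ^ 2 * Real.logb 2 ((1 - p) ^ 2)
    + 2 * p * (1 - p) * Real.logb 2 (p * (1 - p))
    + p ^ 2 * Real.logb 2 (p ^ 2))

/-- Additivity of entropy: the channel entropy is twice the binary entropy. -/
lemma indXZEntropy_eq {p : ℝ} (h0 : 0 < p) (h1 : p < 1) :
    indXZEntropy p = -2 * (p * Real.log p + (1 - p) * Real.log (1 - p)) / Real.log 2 := by
  have h2 : 0 < 1 - p := by linarith
  unfold indXZEntropy Real.logb
  rw [Real.log_mul h0.ne' h2.ne', Real.log_pow, Real.log_pow]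
  push_cast
  ring

/-- Two-sided bound on `log y` for `0 < y ≤ 1`, with `x = (1 - y) / (1 + y)`, from the series
`-log y = log ((1 + x) / (1 - x)) = 2 (x + x ^ 3 / 3 + x ^ 5 / 5 + ⋯)`. -/
lemma log_bounds {x y : ℝ} (hy : 0 < y) (hy1 : y ≤ 1) (hx : x = (1 - y) / (1 + y)) :
    -(2 * (x + x ^ 3 / 3 + x ^ 5 / 5 + x ^ 7 / (1 - x ^ 2))) ≤ Real.log y ∧
      Real.log y ≤ -(2 * (x + x ^ 3 / 3 + x ^ 5 / 5)) := by
  have hx0 : 0 ≤ x := by rw [hx]; apply div_nonneg <;> linarith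
  have hx1 : x < 1 := by rw [hx, div_lt_one (by linarith)]; linarith
  have e : (1 + x) / (1 - x) = y⁻¹ := by
    have : 1 + y ≠ 0 := by linarith
    have : 1 - x ≠ 0 := by linarith
    have h : x * (1 + y) = 1 - y := by rw [hx]; field_simp
    field_simp
    linarith
  have l := Real.sum_range_le_log_div hx0 hx1 3
  have u := Real.log_div_le_sum_range_add hx0 hx1 3
  rw [e, Real.log_inv] at l u
  norm_num [Finset.sum_range_succ] at l u
  constructor <;> linarith

lemma indXZEntropy_lower_endpoint : indXZEntropy 0.110027 < 1 := by
  rw [indXZEntropy_eq (by norm_num) (by norm_num), div_lt_one (Real.log_pos (by norm_num))]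
  have e : Real.log 0.110027 = Real.log 0.880216 - 3 * Real.log 2 := by
    rw [show (0.110027 : ℝ) = 0.880216 / 2 ^ 3 by norm_num,
      Real.log_div (by norm_num) (by norm_num), Real.log_pow]
    norm_num
  have a := (log_bounds (y := 0.880216) (by norm_num) (by norm_num) rfl).1
  have b := (log_bounds (y := 1 - 0.110027) (by norm_num) (by norm_num) rfl).1
  have c := Real.log_two_gt_d9
  rw [e]
  norm_num at a b c ⊢
  linarith

lemma indXZEntropy_upper_endpoint : 1 < indXZEntropy 0.110028 := by
  rw [indXZEntropy_eq (by norm_num) (by norm_num), one_lt_div (Real.log_pos (by norm_num))]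
  have e : Real.log 0.110028 = Real.log 0.880224 - 3 * Real.log 2 := by
    rw [show (0.110028 : ℝ) = 0.880224 / 2 ^ 3 by norm_num,
      Real.log_div (by norm_num) (by norm_num), Real.log_pow]
    norm_num
  have a := (log_bounds (y := 0.880224) (by norm_num) (by norm_num) rfl).2
  have b := (log_bounds (y := 1 - 0.110028) (by norm_num) (by norm_num) rfl).2
  have c := Real.log_two_lt_d9
  rw [e]
  norm_num at a b c ⊢
  linarith

theorem hashing_point_independent_XZ :
    indXZEntropy 0.110027 < 1 ∧ indXZEntropy 0.110028 > 1 ∧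
      ∃ p : ℝ, 0.110027 < p ∧ p < 0.110028 ∧ indXZEntropy p = 1 := by
  refine ⟨indXZEntropy_lower_endpoint, indXZEntropy_upper_endpoint, ?_⟩
  have hc : ContinuousOn indXZEntropy (Set.Icc 0.110027 0.110028) := by
    have h : ContinuousOn
        (fun p : ℝ => -2 * (p * Real.log p + (1 - p) * Real.log (1 - p)) / Real.log 2)
        (Set.Icc 0.110027 0.110028) := by
      have h1 : ∀ p ∈ Set.Icc (0.110027 : ℝ) 0.110028, p ≠ 0 := fun p hp =>
        (lt_of_lt_of_le (by norm_num) hp.1).ne'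
      have h2 : ∀ p ∈ Set.Icc (0.110027 : ℝ) 0.110028, 1 - p ≠ 0 := fun p hp =>
        (sub_pos.2 (lt_of_le_of_lt hp.2 (by norm_num))).ne'
      have h3 : ContinuousOn (fun p : ℝ => Real.log p) (Set.Icc 0.110027 0.110028) :=
        continuousOn_id.log h1
      have h4 : ContinuousOn (fun p : ℝ => Real.log (1 - p)) (Set.Icc 0.110027 0.110028) :=
        (continuousOn_const.sub continuousOn_id).log h2
      fun_prop
    exact h.congr fun p hp => indXZEntropy_eq (lt_of_lt_of_le (by norm_num) hp.1)
      (lt_of_le_of_lt hp.2 (by norm_num))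
  obtain ⟨p, hp, h⟩ := intermediate_value_Ioo (by norm_num) hc
    ⟨indXZEntropy_lower_endpoint, indXZEntropy_upper_endpoint⟩
  exact ⟨p, hp.1, hp.2, h⟩
end

section
/- Let p = 0.0634. Then (a) the depolarizing-channel entropy satisfies −((1−3p)·logb 2 (1−3p) + 3·p·logb 2 p) > 1, so the random stabilizer (hashing) rate 1 minus this entropy is negative at p; and (b) S_RB(p) < 1, so the rate Q = (1/5)·(1 − S_RB(p)) achieved by the 5-qubit phase-flip repetition code followed by random hashing is positive at p. Hence the 5-qubit repetition code exhibits non-additivity: it achieves a positive rate at a depolarizing noise rate strictly above the hashing point. -/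
/-!
Write `ℓ = logb 2`. With `p = 0.0634`, `u = 1 - 2p`, `w = 2p`, so that `u + w = 1`, all arguments of
`ℓ` in `S_RB(p)` factor through six rationals: `u`, `w`, `fe`, `fo`, `A = u⁵ + w⁵` and
`B = u³ + w³`, because `u⁴w + uw⁴ = uwB` and `u³w² + u²w³ = u²w²`. Hence `S_RB(p)` is a rational
linear combination of their logarithms and `1`, with negative coefficients at `u, w, fe, fo` and
positive ones at `A, B`. It is therefore bounded above using rational lower bounds for the first
four logarithms and upper bounds for the other two. A bound `ℓ x ≤ -a/b` amounts to the integer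
power inequality `x ^ b * 2 ^ a ≤ 1` (`logb_two_le`, `le_logb_two`), which is plain rational
arithmetic. The fractions `a/b` are one-sided Diophantine approximations chosen so that the
accumulated error (about `2.8e-4`) stays below the margin `1 - S_RB(p) ≈ 3.4e-4`. The hashing
entropy, about `1.0033`, is treated the same way.
-/

/-- `N(t) = -t·log₂ t` (with `N(0) = 0` by Lean's conventions). -/
noncomputable def Nent (t : ℝ) : ℝ := -(t * Real.logb 2 t)

/-- The entropy `S_RB` of the DiVincenzo–Shor–Smolin rate formula for the 5-qubit
phase-flip repetition code on the depolarizing channel with error probabilities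
`(1-3p, p, p, p)`, computed from the coset weight enumerators of the `[[5,1]]`
Z-type repetition code evaluated at `(x, y) = (1-3p, p)`. -/
noncomputable def SRB (p : ℝ) : ℝ :=
  let u := 1 - 2 * p
  let w := 2 * p
  let fe := (u ^ 5 + (1 - 4 * p) ^ 5) / 2
  let fo := (u ^ 5 - (1 - 4 * p) ^ 5) / 2
  let g : ℕ → ℝ := fun k => (1 / 2) * u ^ (5 - k) * w ^ k
  (Nent fe + Nent fo + 2 * Nent (g 5) + 10 * Nent (g 1) + 10 * Nent (g 4)
      + 20 * Nent (g 2) + 20 * Nent (g 3))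
    - (Nent (u ^ 5 + w ^ 5) + 5 * Nent (u ^ 4 * w + u * w ^ 4)
      + 10 * Nent (u ^ 3 * w ^ 2 + u ^ 2 * w ^ 3))

theorem logb_two_le {x : ℝ} (a b : ℕ) (hx : 0 < x) (hb : 0 < b) (h : x ^ b * 2 ^ a ≤ 1) :
    Real.logb 2 x ≤ -(a / b : ℝ) := by
  have hlog := Real.logb_le_logb_of_le (b := 2) (by norm_num) (by positivity) h
  rw [Real.logb_mul (by positivity) (by positivity), Real.logb_pow, Real.logb_pow,
    Real.logb_self_eq_one (by norm_num), Real.logb_one] at hlog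
  have hb' : (0 : ℝ) < b := by exact_mod_cast hb
  rw [← neg_div, le_div_iff₀ hb']
  linarith

theorem le_logb_two {x : ℝ} (a b : ℕ) (hx : 0 < x) (hb : 0 < b) (h : 1 ≤ x ^ b * 2 ^ a) :
    -(a / b : ℝ) ≤ Real.logb 2 x := by
  have hlog := Real.logb_le_logb_of_le (b := 2) (by norm_num) (by norm_num) h
  rw [Real.logb_mul (by positivity) (by positivity), Real.logb_pow, Real.logb_pow,
    Real.logb_self_eq_one (by norm_num), Real.logb_one] at hlog
  have hb' : (0 : ℝ) < b := by exact_mod_cast hb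
  rw [← neg_div, div_le_iff₀ hb']
  linarith

theorem hashing_entropy_gt_one :
    -((1 - 3 * (0.0634 : ℝ)) * Real.logb 2 (1 - 3 * (0.0634 : ℝ))
        + 3 * 0.0634 * Real.logb 2 0.0634) > 1 := by
  have h₁ := logb_two_le (x := 1 - 3 * (0.0634 : ℝ)) 7 23 (by norm_num) (by norm_num)
    (by norm_num)
  have h₂ := logb_two_le (x := (0.0634 : ℝ)) 147 37 (by norm_num) (by norm_num) (by norm_num)
  norm_num at h₁ h₂ ⊢
  linarith

/-- The logarithm of a coset probability `g k`, split into the logarithms of `u` and `w`. -/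
theorem logb_two_half_mul {u w : ℝ} (hu : 0 < u) (hw : 0 < w) (i j : ℕ) :
    Real.logb 2 ((1 / 2) * u ^ i * w ^ j)
      = -1 + i * Real.logb 2 u + j * Real.logb 2 w := by
  rw [Real.logb_mul (by positivity) (by positivity), Real.logb_mul (by positivity) (by positivity),
    Real.logb_pow, Real.logb_pow, one_div, Real.logb_inv, Real.logb_self_eq_one (by norm_num)]

-- The bound for `fo` involves `2 ^ 343`.
set_option exponentiation.threshold 400 in
theorem SRB_lt_one : SRB 0.0634 < 1 := by
  have hu : -((9 : ℕ) / (46 : ℕ) : ℝ) ≤ Real.logb 2 (2183 / 2500) :=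
    le_logb_two 9 46 (by norm_num) (by norm_num) (by norm_num)
  have hw : -((146 : ℕ) / (49 : ℕ) : ℝ) ≤ Real.logb 2 (317 / 2500) :=
    le_logb_two 146 49 (by norm_num) (by norm_num) (by norm_num)
  have hfe : -((56 : ℕ) / (39 : ℕ) : ℝ)
      ≤ Real.logb 2 (72199096663467719 / 195312500000000000) :=
    le_logb_two 56 39 (by norm_num) (by norm_num) (by norm_num)
  have hfo : -((343 : ℕ) / (120 : ℕ) : ℝ)
      ≤ Real.logb 2 (26952263032754567 / 195312500000000000) :=
    le_logb_two 343 120 (by norm_num) (by norm_num) (by norm_num)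
  have hA : Real.logb 2 (3966310474121 / 7812500000000) ≤ -((133 : ℕ) / (136 : ℕ) : ℝ) :=
    logb_two_le 133 136 (by norm_num) (by norm_num) (by norm_num)
  have hB : Real.logb 2 (4173967 / 6250000) ≤ -((53 : ℕ) / (91 : ℕ) : ℝ) :=
    logb_two_le 53 91 (by norm_num) (by norm_num) (by norm_num)
  have hg := logb_two_half_mul (u := 2183 / 2500) (w := 317 / 2500) (by norm_num) (by norm_num)
  have e_u : 1 - (317 / 2500 : ℝ) = 2183 / 2500 := by norm_num
  have e_w : 2 * (0.0634 : ℝ) = 317 / 2500 := by norm_num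
  have e_fe : ((2183 / 2500 : ℝ) ^ 5 + (1 - 4 * 0.0634) ^ 5) / 2
      = 72199096663467719 / 195312500000000000 := by norm_num
  have e_fo : ((2183 / 2500 : ℝ) ^ 5 - (1 - 4 * 0.0634) ^ 5) / 2
      = 26952263032754567 / 195312500000000000 := by norm_num
  have e_A : (2183 / 2500 : ℝ) ^ 5 + (317 / 2500) ^ 5 = 3966310474121 / 7812500000000 := by
    norm_num
  have e_B : Real.logb 2 ((2183 / 2500 : ℝ) ^ 4 * (317 / 2500) + 2183 / 2500 * (317 / 2500) ^ 4)
      = Real.logb 2 (2183 / 2500) + Real.logb 2 (317 / 2500)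
        + Real.logb 2 (4173967 / 6250000) := by
    rw [← Real.logb_mul (by norm_num) (by norm_num), ← Real.logb_mul (by norm_num) (by norm_num)]
    norm_num
  have e_C : Real.logb 2 ((2183 / 2500 : ℝ) ^ 3 * (317 / 2500) ^ 2
        + (2183 / 2500) ^ 2 * (317 / 2500) ^ 3)
      = (2 : ℕ) * Real.logb 2 (2183 / 2500) + (2 : ℕ) * Real.logb 2 (317 / 2500) := by
    rw [← Real.logb_pow, ← Real.logb_pow, ← Real.logb_mul (by norm_num) (by norm_num)]
    norm_num
  simp only [SRB, Nent, e_u, e_w, e_fe, e_fo, e_A, e_B, e_C, hg]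
  -- Naming the logarithms keeps the numerical normalization below from rewriting their arguments.
  generalize Real.logb 2 (2183 / 2500) = lu at *
  generalize Real.logb 2 (317 / 2500) = lw at *
  generalize Real.logb 2 (72199096663467719 / 195312500000000000) = lfe at *
  generalize Real.logb 2 (26952263032754567 / 195312500000000000) = lfo at *
  generalize Real.logb 2 (3966310474121 / 7812500000000) = lA at *
  generalize Real.logb 2 (4173967 / 6250000) = lB at *
  clear hg e_u e_w e_fe e_fo e_A e_B e_C
  norm_num at hu hw hfe hfo hA hB ⊢
  linarith

theorem five_rep_nonadditivity_at_0634 :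
    -- (a) at p = 0.0634 the depolarizing-channel entropy exceeds 1, so the hashing
    -- rate 1 minus this entropy is negative;
    (-((1 - 3 * (0.0634 : ℝ)) * Real.logb 2 (1 - 3 * (0.0634 : ℝ))
        + 3 * 0.0634 * Real.logb 2 0.0634) > 1) ∧
    (1 - -((1 - 3 * (0.0634 : ℝ)) * Real.logb 2 (1 - 3 * (0.0634 : ℝ))
        + 3 * 0.0634 * Real.logb 2 0.0634) < 0) ∧
    -- (b) S_RB(0.0634) < 1, so the rate of the 5-qubit repetition code followed by
    -- random hashing is positive.
    SRB 0.0634 < 1 ∧ (1 / 5 : ℝ) * (1 - SRB 0.0634) > 0 := by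
  have ha := hashing_entropy_gt_one
  have hb := SRB_lt_one
  exact ⟨ha, by linarith, hb, by linarith⟩
end

section
/- With S_RB defined from the coset weight enumerators of the [[5,1]] Z-type repetition code on the depolarizing channel, the inequalities S_RB(0.063452) < 1 and S_RB(0.063453) > 1 hold; consequently there exists p with 0.063452 < p < 0.063453 at which S_RB(p) = 1, i.e. the error threshold of the 5-qubit phase-flip repetition code (followed by random hashing) for the depolarizing channel lies strictly between 0.063452 and 0.063453. -/
/-- Enclosure of `log y` from seven terms of the series for `2 artanh ((y - 1) / (y + 1))`, the
upper bound including the truncation error. -/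
lemma log_bounds_s19 {y a b : ℝ} (hy : 1 ≤ y)
    (ha : a ≤ 2 * ∑ i ∈ Finset.range 7, ((y - 1) / (y + 1)) ^ (2 * i + 1) / (2 * (i : ℝ) + 1))
    (hb : 2 * (∑ i ∈ Finset.range 7, ((y - 1) / (y + 1)) ^ (2 * i + 1) / (2 * (i : ℝ) + 1) +
      ((y - 1) / (y + 1)) ^ 15 / (1 - ((y - 1) / (y + 1)) ^ 2)) ≤ b) :
    a ≤ Real.log y ∧ Real.log y ≤ b := by
  have h0 : 0 ≤ (y - 1) / (y + 1) := div_nonneg (by linarith) (by linarith)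
  have h1 : (y - 1) / (y + 1) < 1 := by
    rw [div_lt_one (by linarith)]
    linarith
  have e : (1 + (y - 1) / (y + 1)) / (1 - (y - 1) / (y + 1)) = y := by
    have : y + 1 ≠ 0 := by linarith
    have h2 : 1 - (y - 1) / (y + 1) = 2 / (y + 1) := by
      field_simp
      ring
    rw [h2]
    field_simp
    ring
  have l := Real.sum_range_le_log_div h0 h1 7
  have r := Real.log_div_le_sum_range_add h0 h1 7
  rw [e] at l r
  norm_num only at l r
  constructor <;> linarith

lemma log_bounds_mul {x a b : ℝ} {k : ℕ} (hx : 0 < x) (hy : 1 ≤ 2 ^ k * x)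
    (ha : a ≤ 2 * ∑ i ∈ Finset.range 7,
      ((2 ^ k * x - 1) / (2 ^ k * x + 1)) ^ (2 * i + 1) / (2 * (i : ℝ) + 1))
    (hb : 2 * (∑ i ∈ Finset.range 7,
        ((2 ^ k * x - 1) / (2 ^ k * x + 1)) ^ (2 * i + 1) / (2 * (i : ℝ) + 1) +
      ((2 ^ k * x - 1) / (2 ^ k * x + 1)) ^ 15 /
        (1 - ((2 ^ k * x - 1) / (2 ^ k * x + 1)) ^ 2)) ≤ b) :
    a ≤ k * Real.log 2 + Real.log x ∧ k * Real.log 2 + Real.log x ≤ b := by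
  have h := log_bounds_s19 hy ha hb
  rwa [Real.log_mul (by positivity) hx.ne', Real.log_pow] at h

lemma log_bounds_inv {x a b : ℝ} {k : ℕ} (hx : 0 < x) (hy : 1 ≤ (2 ^ k * x)⁻¹)
    (ha : a ≤ 2 * ∑ i ∈ Finset.range 7,
      (((2 ^ k * x)⁻¹ - 1) / ((2 ^ k * x)⁻¹ + 1)) ^ (2 * i + 1) / (2 * (i : ℝ) + 1))
    (hb : 2 * (∑ i ∈ Finset.range 7,
        (((2 ^ k * x)⁻¹ - 1) / ((2 ^ k * x)⁻¹ + 1)) ^ (2 * i + 1) / (2 * (i : ℝ) + 1) +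
      (((2 ^ k * x)⁻¹ - 1) / ((2 ^ k * x)⁻¹ + 1)) ^ 15 /
        (1 - (((2 ^ k * x)⁻¹ - 1) / ((2 ^ k * x)⁻¹ + 1)) ^ 2)) ≤ b) :
    a ≤ -(k * Real.log 2 + Real.log x) ∧ -(k * Real.log 2 + Real.log x) ≤ b := by
  have h := log_bounds_s19 hy ha hb
  rwa [Real.log_inv, Real.log_mul (by positivity) hx.ne', Real.log_pow] at h

lemma Nent_mul_log_two (t : ℝ) : Nent t * Real.log 2 = -(t * Real.log t) := by
  have : Real.log 2 ≠ 0 := (Real.log_pos (by norm_num)).ne'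
  unfold Nent Real.logb
  field_simp

lemma log_half_mul_pow {u w : ℝ} (hu : 0 < u) (hw : 0 < w) (j k : ℕ) :
    Real.log ((1 / 2) * u ^ j * w ^ k)
      = -Real.log 2 + j * Real.log u + k * Real.log w := by
  rw [Real.log_mul (by positivity) (by positivity), Real.log_mul (by positivity) (by positivity),
    Real.log_pow, Real.log_pow, one_div, Real.log_inv]

/-- `SRB p` in natural logarithms, with every argument factored as far as `u + w = 1` allows. -/
lemma SRB_mul_log_two {p : ℝ} (h0 : 0 < p) (h1 : p < 1 / 4) :
    SRB p * Real.log 2 =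
      -((((1 - 2 * p) ^ 5 + (1 - 4 * p) ^ 5) / 2)
          * Real.log (((1 - 2 * p) ^ 5 + (1 - 4 * p) ^ 5) / 2))
      - (((1 - 2 * p) ^ 5 - (1 - 4 * p) ^ 5) / 2)
          * Real.log (((1 - 2 * p) ^ 5 - (1 - 4 * p) ^ 5) / 2)
      - (2 * p) ^ 5 * (-Real.log 2 + 5 * Real.log (2 * p))
      - 5 * ((1 - 2 * p) ^ 4 * (2 * p))
          * (-Real.log 2 + 4 * Real.log (1 - 2 * p) + Real.log (2 * p))
      - 5 * ((1 - 2 * p) * (2 * p) ^ 4)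
          * (-Real.log 2 + Real.log (1 - 2 * p) + 4 * Real.log (2 * p))
      - 10 * ((1 - 2 * p) ^ 3 * (2 * p) ^ 2)
          * (-Real.log 2 + 3 * Real.log (1 - 2 * p) + 2 * Real.log (2 * p))
      - 10 * ((1 - 2 * p) ^ 2 * (2 * p) ^ 3)
          * (-Real.log 2 + 2 * Real.log (1 - 2 * p) + 3 * Real.log (2 * p))
      + (1 - 5 * ((1 - 2 * p) * (2 * p)) + 5 * ((1 - 2 * p) * (2 * p)) ^ 2)
          * Real.log (1 - 5 * ((1 - 2 * p) * (2 * p)) + 5 * ((1 - 2 * p) * (2 * p)) ^ 2)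
      + 5 * ((1 - 2 * p) * (2 * p) * (1 - 3 * ((1 - 2 * p) * (2 * p))))
          * (Real.log (1 - 2 * p) + Real.log (2 * p)
            + Real.log (1 - 3 * ((1 - 2 * p) * (2 * p))))
      + 10 * ((1 - 2 * p) * (2 * p)) ^ 2
          * (2 * (Real.log (1 - 2 * p) + Real.log (2 * p))) := by
  have hu : 0 < 1 - 2 * p := by linarith
  have hw : 0 < 2 * p := by linarith
  have hB : 0 < 1 - 3 * ((1 - 2 * p) * (2 * p)) := by nlinarith [sq_nonneg (4 * p - 1)]
  have eA : (1 - 2 * p) ^ 5 + (2 * p) ^ 5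
      = 1 - 5 * ((1 - 2 * p) * (2 * p)) + 5 * ((1 - 2 * p) * (2 * p)) ^ 2 := by ring
  have eB : (1 - 2 * p) ^ 4 * (2 * p) + (1 - 2 * p) * (2 * p) ^ 4
      = (1 - 2 * p) * (2 * p) * (1 - 3 * ((1 - 2 * p) * (2 * p))) := by ring
  have eC : (1 - 2 * p) ^ 3 * (2 * p) ^ 2 + (1 - 2 * p) ^ 2 * (2 * p) ^ 3
      = ((1 - 2 * p) * (2 * p)) ^ 2 := by ring
  simp only [SRB, eA, eB, eC]
  simp only [sub_mul _ _ (Real.log 2), add_mul _ _ (Real.log 2), mul_assoc _ (Nent _),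
    Nent_mul_log_two, log_half_mul_pow hu hw]
  rw [Real.log_mul (mul_pos hu hw).ne' hB.ne', Real.log_pow, Real.log_mul hu.ne' hw.ne']
  push_cast
  ring

lemma continuous_Nent : Continuous Nent := by
  have : Nent = fun t => Real.negMulLog t / Real.log 2 := by
    funext t
    simp only [Nent, Real.logb, Real.negMulLog]
    ring
  rw [this]
  fun_prop

lemma continuous_SRB : Continuous SRB := by
  have := continuous_Nent
  unfold SRB
  fun_prop

lemma SRB_left_lt_one : SRB 0.063452 < 1 := by
  -- The arguments `x` are the exact values of `u`, `w`, `fe`, `fo`, `1 - 5uw + 5(uw)²`, `1 - 3uw`.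
  have hu := log_bounds_inv (x := 0.873096) (k := 0) (a := 0.135709763) (b := 0.135709765)
    (by norm_num) (by norm_num) (by norm_num [Finset.sum_range_succ])
    (by norm_num [Finset.sum_range_succ])
  have hw := log_bounds_mul (x := 0.126904) (k := 3) (a := 0.015117157) (b := 0.015117159)
    (by norm_num) (by norm_num) (by norm_num [Finset.sum_range_succ])
    (by norm_num [Finset.sum_range_succ])
  have he := log_bounds_inv (x := 0.369346948926617339240318255104)
    (k := 1) (a := 0.302871654) (b := 0.302871656)
    (by norm_num) (by norm_num) (by norm_num [Finset.sum_range_succ])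
    (by norm_num [Finset.sum_range_succ])
  have ho := log_bounds_mul (x := 0.138005770727393483857048911872)
    (k := 3) (a := 0.098981763) (b := 0.098981765)
    (by norm_num) (by norm_num) (by norm_num [Finset.sum_range_succ])
    (by norm_num [Finset.sum_range_succ])
  have ha := log_bounds_mul (x := 0.50738563334262647523328)
    (k := 1) (a := 0.014663233) (b := 0.014663235)
    (by norm_num) (by norm_num) (by norm_num [Finset.sum_range_succ])
    (by norm_num [Finset.sum_range_succ])
  have hb := log_bounds_inv (x := 0.667601875648) (k := 0) (a := 0.404063277) (b := 0.404063279)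
    (by norm_num) (by norm_num) (by norm_num [Finset.sum_range_succ])
    (by norm_num [Finset.sum_range_succ])
  have key := SRB_mul_log_two (p := 0.063452) (by norm_num) (by norm_num)
  norm_num1 at hu hw he ho ha hb key
  have h1 := Real.log_two_gt_d9
  have h2 := Real.log_two_lt_d9
  have h : SRB 0.063452 * Real.log 2 < 1 * Real.log 2 := by
    norm_num1
    linarith
  exact lt_of_mul_lt_mul_right h (by linarith)

lemma SRB_right_gt_one : SRB 0.063453 > 1 := by
  -- The arguments `x` are the exact values of `u`, `w`, `fe`, `fo`, `1 - 5uw + 5(uw)²`, `1 - 3uw`.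
  have hu := log_bounds_inv (x := 0.873094) (k := 0) (a := 0.135712053) (b := 0.135712055)
    (by norm_num) (by norm_num) (by norm_num [Finset.sum_range_succ])
    (by norm_num [Finset.sum_range_succ])
  have hw := log_bounds_mul (x := 0.126906) (k := 3) (a := 0.015132917) (b := 0.015132919)
    (by norm_num) (by norm_num) (by norm_num [Finset.sum_range_succ])
    (by norm_num [Finset.sum_range_succ])
  have he := log_bounds_inv (x := 0.369340943202193056434891323696)
    (k := 1) (a := 0.302887915) (b := 0.302887917)
    (by norm_num) (by norm_num) (by norm_num [Finset.sum_range_succ])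
    (by norm_num [Finset.sum_range_succ])
  have ho := log_bounds_mul (x := 0.138005965516991874022728756528)
    (k := 3) (a := 0.098983174) (b := 0.098983176)
    (by norm_num) (by norm_num) (by norm_num [Finset.sum_range_succ])
    (by norm_num [Finset.sum_range_succ])
  have ha := log_bounds_mul (x := 0.50737982500147186701448)
    (k := 1) (a := 0.014651785) (b := 0.014651787)
    (by norm_num) (by norm_num) (by norm_num [Finset.sum_range_succ])
    (by norm_num [Finset.sum_range_succ])
  have hb := log_bounds_inv (x := 0.667597398508) (k := 0) (a := 0.404069983) (b := 0.404069985)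
    (by norm_num) (by norm_num) (by norm_num [Finset.sum_range_succ])
    (by norm_num [Finset.sum_range_succ])
  have key := SRB_mul_log_two (p := 0.063453) (by norm_num) (by norm_num)
  norm_num1 at hu hw he ho ha hb key
  have h1 := Real.log_two_gt_d9
  have h2 := Real.log_two_lt_d9
  have h : 1 * Real.log 2 < SRB 0.063453 * Real.log 2 := by
    norm_num1
    linarith
  exact lt_of_mul_lt_mul_right h (by linarith)

theorem five_rep_threshold_depolarizing :
    SRB 0.063452 < 1 ∧ SRB 0.063453 > 1 ∧
      ∃ p : ℝ, 0.063452 < p ∧ p < 0.063453 ∧ SRB p = 1 := by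
  refine ⟨SRB_left_lt_one, SRB_right_gt_one, ?_⟩
  obtain ⟨p, hp, h⟩ := intermediate_value_Ioo (a := (0.063452 : ℝ)) (b := 0.063453) (by norm_num)
    continuous_SRB.continuousOn ⟨SRB_left_lt_one, SRB_right_gt_one⟩
  exact ⟨p, hp.1, hp.2, h⟩
end
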